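/- Let 1 ≤ k ≤ n, x ∈ F_2^n, η ∈ [0, 1/2), and π := 1 − 2η. Generate a random k-flat V as follows: draw (ℓ_1,…,ℓ_k) uniformly from the set of linearly independent k-tuples of linear forms on F_2^n; independently draw ε_1,…,ε_{k−1} i.i.d. uniform in F_2; independently draw e ∈ F_2 with P(e = 1) = η; set ε_k := ℓ_k(x) + 1 + e; and let V := {z ∈ F_2^n : ℓ_i(z) = ε_i for all i = 1,…,k}. Then the distribution of V equals q_{x,π} = (1 − π) q_0 + π q_x. -/

import Mathlib

open scoped BigOperators Classical
open Filter Topology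

abbrev F2n (n : ℕ) := Fin n → ZMod 2

def IsFlat (n k : ℕ) (W : Set (F2n n)) : Prop :=
  ∃ A : AffineSubspace (ZMod 2) (F2n n),
    (A : Set (F2n n)) = W ∧ W.Nonempty ∧ Module.finrank (ZMod 2) A.direction = n - k

def Flat (n k : ℕ) : Type := {W : Set (F2n n) // IsFlat n k W}

noncomputable instance (n k : ℕ) : Fintype (Flat n k) := by
  unfold Flat; exact Fintype.ofFinite _

noncomputable def q0 (n k : ℕ) : Flat n k → ℝ :=
  fun _ => (Fintype.card (Flat n k) : ℝ)⁻¹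

noncomputable def qx (n k : ℕ) (x : F2n n) : Flat n k → ℝ :=
  fun W => if x ∈ W.1 then 0 else (Nat.card {W : Flat n k // x ∉ W.1} : ℝ)⁻¹

noncomputable def prob {α : Type*} [Fintype α] (p : α → ℝ) (E : Set α) : ℝ :=
  ∑ a, if a ∈ E then p a else 0

noncomputable def expect {α : Type*} [Fintype α] (p : α → ℝ) (f : α → ℝ) : ℝ :=
  ∑ a, p a * f a

noncomputable def Punif (n k m : ℕ) : (Fin m → Flat n k) → ℝ :=
  fun V => ∏ j, q0 n k (V j)

noncomputable def Pplanted (n k m : ℕ) : (Fin m → Flat n k) → ℝ :=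
  fun V => ((2:ℝ)^n)⁻¹ * ∑ x : F2n n, ∏ j, qx n k x (V j)

noncomputable def Z (n k m : ℕ) (V : Fin m → Flat n k) : ℕ :=
  Nat.card {x : F2n n // ∀ j, x ∉ (V j).1}

noncomputable def satCount (n k m : ℕ) (V : Fin m → Flat n k) (x : F2n n) : ℕ :=
  Nat.card {j : Fin m // x ∉ (V j).1}

noncomputable def maxSat (n k m : ℕ) (V : Fin m → Flat n k) : ℕ :=
  Finset.univ.sup (fun x : F2n n => satCount n k m V x)

noncomputable def qxpi (n k : ℕ) (x : F2n n) (π : ℝ) : Flat n k → ℝ :=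
  fun W => (1 - π) * q0 n k W + π * qx n k x W

noncomputable def Pplantedpi (n k m : ℕ) (π : ℝ) : (Fin m → Flat n k) → ℝ :=
  fun V => ((2:ℝ)^n)⁻¹ * ∑ x : F2n n, ∏ j, qxpi n k x π (V j)

noncomputable def DeltaK (k : ℕ) : ℝ :=
  Real.log (1/2) / Real.log (1 - ((2:ℝ)^k)⁻¹)

abbrev LinForm (n : ℕ) := F2n n →ₗ[ZMod 2] ZMod 2

noncomputable instance (n : ℕ) : Fintype (LinForm n) :=
  Fintype.ofInjective (fun f => (f : F2n n → ZMod 2)) DFunLike.coe_injective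

noncomputable instance (n k : ℕ) :
    Fintype {ℓ : Fin k → LinForm n // LinearIndependent (ZMod 2) ℓ} :=
  Fintype.ofFinite _


/-- extend an isomorphism of subspaces to an automorphism -/
lemma exists_auto {K V : Type*} [Field K] [AddCommGroup V] [Module K V] [FiniteDimensional K V]
    {m : ℕ} (v v' : Fin m → V) (hv : LinearIndependent K v) (hv' : LinearIndependent K v') :
    ∃ φ : V ≃ₗ[K] V, ∀ i, φ (v i) = v' i := by
  obtain ⟨g, hg⟩ := Submodule.exists_linearEquiv_restrict_eq
    ((Module.Basis.span hv).equiv (Module.Basis.span hv') (Equiv.refl _))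
  refine ⟨g, fun i => ?_⟩
  have := hg (Module.Basis.span hv i)
  rw [Module.Basis.equiv_apply] at this
  simpa [Module.Basis.span_apply] using this.symm

lemma exists_auto_sub {n : ℕ} (D D' : Submodule (ZMod 2) (F2n n))
    (h : Module.finrank (ZMod 2) D = Module.finrank (ZMod 2) D') (u u' : F2n n)
    (hu : u ∉ D) (hu' : u' ∉ D') :
    ∃ φ : F2n n ≃ₗ[ZMod 2] F2n n, φ u = u' ∧ ∀ z, φ z ∈ D' ↔ z ∈ D := by
  have b := Module.finBasis (ZMod 2) D
  have b' := Module.finBasisOfFinrankEq (ZMod 2) D' h.symm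
  have s1 : Submodule.span (ZMod 2) (Set.range fun i => (b i : F2n n)) = D := by
    have := congrArg (Submodule.map D.subtype) b.span_eq
    rw [Submodule.map_span, ← Set.range_comp] at this
    simpa [Function.comp_def] using this
  have s2 : Submodule.span (ZMod 2) (Set.range fun i => (b' i : F2n n)) = D' := by
    have := congrArg (Submodule.map D'.subtype) b'.span_eq
    rw [Submodule.map_span, ← Set.range_comp] at this
    simpa [Function.comp_def] using this
  have l1 : LinearIndependent (ZMod 2) (fun i => (b i : F2n n)) :=
    b.linearIndependent.map' D.subtype (Submodule.ker_subtype D)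
  have l2 : LinearIndependent (ZMod 2) (fun i => (b' i : F2n n)) :=
    b'.linearIndependent.map' D'.subtype (Submodule.ker_subtype D')
  obtain ⟨φ, hφ⟩ := exists_auto _ _
    (linearIndependent_finCons.2 ⟨l1, by rwa [s1]⟩) (linearIndependent_finCons.2 ⟨l2, by rwa [s2]⟩)
  refine ⟨φ, by simpa using hφ 0, ?_⟩
  have hm : D.map (φ : F2n n →ₗ[ZMod 2] F2n n) = D' := by
    rw [← s1, ← s2, Submodule.map_span, ← Set.range_comp]
    congr 2
    funext i
    simpa using hφ i.succ
  intro z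
  rw [← hm]
  simp

lemma exists_auto_sub0 {n : ℕ} (D D' : Submodule (ZMod 2) (F2n n))
    (h : Module.finrank (ZMod 2) D = Module.finrank (ZMod 2) D') :
    ∃ φ : F2n n ≃ₗ[ZMod 2] F2n n, ∀ z, φ z ∈ D' ↔ z ∈ D := by
  by_cases hD : ∃ u, u ∉ D
  · obtain ⟨u, hu⟩ := hD
    have : ∃ u', u' ∉ D' := by
      by_contra! hh
      have e : D' = ⊤ := by ext; simp [hh]
      rw [e, finrank_top] at h
      exact hu (by rw [Submodule.eq_top_of_finrank_eq h]; trivial)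
    obtain ⟨u', hu'⟩ := this
    obtain ⟨φ, -, h⟩ := exists_auto_sub D D' h u u' hu hu'
    exact ⟨φ, h⟩
  · push Not at hD
    have e : D = ⊤ := by ext; simp [hD]
    have e' : D' = ⊤ := by
      rw [e, finrank_top] at h
      exact Submodule.eq_top_of_finrank_eq h.symm
    exact ⟨LinearEquiv.refl _ _, by simp [e, e']⟩

lemma orbit {n k : ℕ} (x : F2n n) (W W' : Flat n k) (h : x ∈ W.1 ↔ x ∈ W'.1) :
    ∃ φ : F2n n ≃ₗ[ZMod 2] F2n n, ∀ z, φ z + x ∈ W'.1 ↔ z + x ∈ W.1 := by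
  obtain ⟨W, A, rfl, ⟨w, hw⟩, hA⟩ := W
  obtain ⟨W', A', rfl, ⟨w', hw'⟩, hA'⟩ := W'
  simp only [SetLike.mem_coe] at *
  by_cases hx : x ∈ A
  · have hx' := h.1 hx
    obtain ⟨φ, hφ⟩ := exists_auto_sub0 A.direction A'.direction (hA.trans hA'.symm)
    refine ⟨φ, fun z => ?_⟩
    have h1 := AffineSubspace.vadd_mem_iff_mem_direction z hx
    have h2 := AffineSubspace.vadd_mem_iff_mem_direction (φ z) hx'
    simp only [vadd_eq_add] at h1 h2
    rw [h1, h2, hφ]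
  · have hx' := fun hh => hx (h.2 hh)
    have g1 : ∀ z, z + x ∈ A ↔ z - (w - x) ∈ A.direction := by
      intro z
      rw [← AffineSubspace.vadd_mem_iff_mem_direction _ hw, vadd_eq_add]
      congr! 1; abel
    have g2 : ∀ z, z + x ∈ A' ↔ z - (w' - x) ∈ A'.direction := by
      intro z
      rw [← AffineSubspace.vadd_mem_iff_mem_direction _ hw', vadd_eq_add]
      congr! 1; abel
    obtain ⟨φ, hu, hφ⟩ := exists_auto_sub A.direction A'.direction (hA.trans hA'.symm) (w - x) (w' - x)
      (by have := g1 0; simp only [zero_add, zero_sub, neg_mem_iff] at this; rwa [← this])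
      (by have := g2 0; simp only [zero_add, zero_sub, neg_mem_iff] at this; rwa [← this])
    refine ⟨φ, fun z => ?_⟩
    rw [g1, g2, ← hu, ← map_sub, hφ]

/-- the flat relative to `x` -/
def VV {n k : ℕ} (x : F2n n) (ℓ : Fin k → LinForm n) (δ : Fin k → ZMod 2) : Set (F2n n) :=
  {z | ∀ i, ℓ i (z - x) = δ i}

lemma isFlat_VV {n k : ℕ} (x : F2n n) (ℓ : Fin k → LinForm n) (δ : Fin k → ZMod 2)
    (hl : LinearIndependent (ZMod 2) ℓ) : IsFlat n k (VV x ℓ δ) := by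
  have hker : LinearMap.ker (LinearMap.pi ℓ) =
      (Submodule.span (ZMod 2) (Set.range ℓ)).dualCoannihilator := by
    apply SetLike.coe_injective
    rw [Submodule.coe_dualCoannihilator_span]
    ext z
    simp [funext_iff]
  have hf := Subspace.finrank_add_finrank_dualCoannihilator_eq
    (Submodule.span (ZMod 2) (Set.range ℓ))
  rw [← hker, finrank_span_eq_card hl] at hf
  simp only [Fintype.card_fin, Module.finrank_fin_fun] at hf
  have hr := LinearMap.finrank_range_add_finrank_ker (LinearMap.pi ℓ)
  simp only [Module.finrank_fin_fun] at hr
  have htop : LinearMap.range (LinearMap.pi ℓ) = ⊤ := by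
    apply Submodule.eq_top_of_finrank_eq
    simp only [Module.finrank_fin_fun]; omega
  obtain ⟨z0, hz0⟩ := LinearMap.range_eq_top.1 htop δ
  have hz0' : ∀ i, ℓ i z0 = δ i := fun i => congrFun hz0 i
  refine ⟨AffineSubspace.mk' (z0 + x) (LinearMap.ker (LinearMap.pi ℓ)), ?_, ⟨z0 + x, ?_⟩, ?_⟩
  · ext z
    simp only [SetLike.mem_coe, AffineSubspace.mem_mk', LinearMap.mem_ker, VV, Set.mem_ofPred_eq,
      funext_iff, LinearMap.pi_apply, vsub_eq_sub]
    refine forall_congr' fun i => ?_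
    rw [← hz0' i, show z - (z0 + x) = (z - x) - z0 by abel, map_sub]
    simp [sub_eq_zero]
  · intro i; simp [hz0']
  · rw [AffineSubspace.direction_mk']; exact Nat.eq_sub_of_add_eq' hf

abbrev LI (n k : ℕ) := {ℓ : Fin k → LinForm n // LinearIndependent (ZMod 2) ℓ}

def pullLI {n k : ℕ} (φ : F2n n ≃ₗ[ZMod 2] F2n n) (ℓ : LI n k) : LI n k :=
  ⟨fun i => (ℓ.1 i).comp (φ : F2n n →ₗ[ZMod 2] F2n n), by
    have := ℓ.2.map' (φ.dualMap : LinForm n →ₗ[ZMod 2] LinForm n) (LinearEquiv.ker _)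
    exact this⟩

def pullEquiv {n k : ℕ} (φ : F2n n ≃ₗ[ZMod 2] F2n n) : LI n k ≃ LI n k where
  toFun := pullLI φ
  invFun := pullLI φ.symm
  left_inv ℓ := by ext; simp [pullLI]
  right_inv ℓ := by ext; simp [pullLI]

lemma count_inv {n k : ℕ} (x : F2n n) (W W' : Flat n k) (h : x ∈ W.1 ↔ x ∈ W'.1)
    (δ : Fin k → ZMod 2) :
    ∑ ℓ : LI n k, (if VV x ℓ.1 δ = W.1 then (1 : ℝ) else 0)
      = ∑ ℓ : LI n k, (if VV x ℓ.1 δ = W'.1 then (1 : ℝ) else 0) := by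
  obtain ⟨φ, hφ⟩ := orbit x W W' h
  refine (Fintype.sum_equiv (pullEquiv φ) _ _ fun ℓ => ?_).symm
  congr 1
  have key : ∀ A B : Set (F2n n), A = B ↔ ∀ z, (z + x ∈ A ↔ z + x ∈ B) := by
    intro A B
    refine ⟨by rintro rfl z; rfl, fun h => ?_⟩
    ext z
    simpa using h (z - x)
  rw [eq_iff_iff, key, key, ← φ.toEquiv.forall_congr_right]
  refine forall_congr' fun z => ?_
  have h1 : φ z + x ∈ VV x ℓ.1 δ ↔ z + x ∈ VV x (pullEquiv φ ℓ).1 δ := by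
    simp [VV, pullEquiv, pullLI]
  exact Iff.trans (iff_congr h1 (hφ z)) Iff.rfl

lemma flat_card {n k : ℕ} (W : Flat n k) : Nat.card W.1 = 2 ^ (n - k) := by
  obtain ⟨W, A, rfl, ⟨w, hw⟩, hA⟩ := W
  have e : A.direction ≃ (A : Set (F2n n)) :=
    { toFun := fun d => ⟨d.1 + w, by
        have := (AffineSubspace.vadd_mem_iff_mem_direction d.1 hw).2 d.2
        simpa using this⟩
      invFun := fun z => ⟨z.1 - w, by
        have := AffineSubspace.vsub_mem_direction z.2 hw
        simpa using this⟩
      left_inv := fun d => by simp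
      right_inv := fun d => by simp }
  rw [← Nat.card_congr e, Module.natCard_eq_pow_finrank (K := ZMod 2), hA]
  simp

lemma isFlat_translate {n k : ℕ} (t : F2n n) {W : Set (F2n n)} (h : IsFlat n k W) :
    IsFlat n k {z | z + t ∈ W} := by
  obtain ⟨A, rfl, ⟨w, hw⟩, hA⟩ := h
  refine ⟨AffineSubspace.mk' (w - t) A.direction, ?_, ⟨w - t, by simpa using hw⟩, ?_⟩
  · ext z
    simp only [SetLike.mem_coe, AffineSubspace.mem_mk', Set.mem_ofPred_eq]
    rw [← AffineSubspace.vadd_mem_iff_mem_direction _ hw]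
    simp only [vadd_eq_add, vsub_eq_sub]
    congr! 1; abel
  · rw [AffineSubspace.direction_mk']; exact hA

def transEquiv {n k : ℕ} (t : F2n n) : Flat n k ≃ Flat n k where
  toFun W := ⟨{z | z + t ∈ W.1}, isFlat_translate t W.2⟩
  invFun W := ⟨{z | z + -t ∈ W.1}, isFlat_translate (-t) W.2⟩
  left_inv W := by apply Subtype.ext; ext z; simp
  right_inv W := by apply Subtype.ext; ext z; simp

lemma cont_const {n k : ℕ} (x y : F2n n) :
    ∑ W : Flat n k, (if x ∈ W.1 then (1 : ℝ) else 0)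
      = ∑ W : Flat n k, (if y ∈ W.1 then (1 : ℝ) else 0) := by
  refine Fintype.sum_equiv (transEquiv (x - y)) _ _ fun W => ?_
  have h : y ∈ (transEquiv (x - y) W).1 ↔ x ∈ W.1 := by
    change y + (x - y) ∈ W.1 ↔ x ∈ W.1
    rw [add_sub_cancel]
  simp only [h]

lemma card_flat {n k : ℕ} (hkn : k ≤ n) (x : F2n n) :
    (Fintype.card (Flat n k) : ℝ) = 2 ^ k * ∑ W : Flat n k, (if x ∈ W.1 then (1 : ℝ) else 0) := by
  have h1 : ∑ y : F2n n, ∑ W : Flat n k, (if y ∈ W.1 then (1 : ℝ) else 0)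
      = 2 ^ n * ∑ W : Flat n k, (if x ∈ W.1 then (1 : ℝ) else 0) := by
    rw [Finset.sum_congr rfl fun y _ => cont_const y x]
    simp
  have h2 : ∀ W : Flat n k, ∑ y : F2n n, (if y ∈ W.1 then (1 : ℝ) else 0) = 2 ^ (n - k) := by
    intro W
    rw [Finset.sum_boole, ← Fintype.card_subtype, ← Nat.card_eq_fintype_card]
    have := flat_card W
    rw [show Nat.card {y // y ∈ W.1} = 2 ^ (n - k) from this]
    simp
  rw [Finset.sum_comm, Finset.sum_congr rfl fun W _ => h2 W] at h1
  simp only [Finset.sum_const, Finset.card_univ, nsmul_eq_mul] at h1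
  have h3 : (2 : ℝ) ^ n = 2 ^ k * 2 ^ (n - k) := by rw [← pow_add]; congr 1; omega
  rw [h3] at h1
  have h4 : (2 : ℝ) ^ (n - k) ≠ 0 := by positivity
  apply mul_right_cancel₀ h4
  rw [h1]; ring

def dl {k : ℕ} (d : Fin (k - 1) → ZMod 2) (e : ZMod 2) : Fin k → ZMod 2 :=
  fun i => if h : (i : ℕ) < k - 1 then d ⟨i, h⟩ else 1 + e

lemma dl_zero {k : ℕ} (hk : 1 ≤ k) (d : Fin (k - 1) → ZMod 2) (e : ZMod 2) :
    (∀ i, 0 = dl d e i) ↔ d = 0 ∧ e = 1 := by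
  constructor
  · intro h
    constructor
    · funext j
      have := h ⟨j, by omega⟩
      simpa [dl] using this.symm
    · have := h ⟨k - 1, by omega⟩
      simp only [dl, lt_irrefl, dite_false] at this
      have h2 : ∀ e : ZMod 2, 0 = 1 + e → e = 1 := by decide
      exact h2 e this
  · rintro ⟨rfl, rfl⟩ i
    unfold dl
    split_ifs
    · rfl
    · decide

lemma mem_VV {n k : ℕ} (hk : 1 ≤ k) (x : F2n n) (ℓ : Fin k → LinForm n)
    (d : Fin (k - 1) → ZMod 2) (e : ZMod 2) : x ∈ VV x ℓ (dl d e) ↔ d = 0 ∧ e = 1 := by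
  rw [← dl_zero hk]
  simp [VV]

lemma reparam {n k : ℕ} (x : F2n n) (ℓ : Fin k → LinForm n) (W : Set (F2n n)) (f : ZMod 2 → ℝ) :
    ∑ ε' : Fin (k-1) → ZMod 2, ∑ e : ZMod 2, f e * (if {z : F2n n | ∀ i : Fin k,
      ℓ i z = (if h : (i : ℕ) < k - 1 then ε' ⟨i, h⟩ else ℓ i x + 1 + e)} = W
             then (1:ℝ) else 0)
    = ∑ d : Fin (k-1) → ZMod 2, ∑ e : ZMod 2, f e *
        (if VV x ℓ (dl d e) = W then (1 : ℝ) else 0) := by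
  refine Fintype.sum_equiv
    (Equiv.subRight (fun j : Fin (k-1) => ℓ ⟨j, by omega⟩ x)) _ _ fun ε' => ?_
  refine Finset.sum_congr rfl fun e _ => ?_
  congr 2
  rw [eq_iff_iff]
  congr! 1
  ext z
  simp only [VV, Set.mem_ofPred_eq, dl]
  refine forall_congr' fun i => ?_
  rw [map_sub]
  split_ifs with h
  · simp
  · rw [sub_eq_iff_eq_add]
    congr! 1; ring

lemma LI_nonempty {n k : ℕ} (hkn : k ≤ n) : Nonempty (LI n k) := by
  refine ⟨⟨fun i => (Pi.basisFun (ZMod 2) (Fin n)).dualBasis (Fin.castLE hkn i), ?_⟩⟩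
  exact (Pi.basisFun (ZMod 2) (Fin n)).dualBasis.linearIndependent.comp _ (Fin.castLE_injective hkn)

/-- Sum of the indicator of one flat over a class of flats. -/
lemma sum_ind {n k : ℕ} (V : Flat n k) (g : Flat n k → ℝ) :
    ∑ W : Flat n k, g W * (if V.1 = W.1 then (1 : ℝ) else 0) = g V := by
  rw [Finset.sum_eq_single V]
  · simp
  · intro W _ hW
    rw [if_neg, mul_zero]
    intro h
    exact hW (Subtype.ext h.symm)
  · simp

noncomputable def SS (n k : ℕ) (x : F2n n) (f : ZMod 2 → ℝ) (W : Flat n k) : ℝ :=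
  ∑ ℓ : LI n k, ∑ d : Fin (k-1) → ZMod 2, ∑ e : ZMod 2, f e *
        (if VV x ℓ.1 (dl d e) = W.1 then (1 : ℝ) else 0)

lemma SS_inv {n k : ℕ} (x : F2n n) (f : ZMod 2 → ℝ) (W W' : Flat n k)
    (h : x ∈ W.1 ↔ x ∈ W'.1) : SS n k x f W = SS n k x f W' := by
  unfold SS
  rw [Finset.sum_comm, Finset.sum_comm (s := (Finset.univ : Finset (LI n k)))]
  refine Finset.sum_congr rfl fun d _ => ?_
  rw [Finset.sum_comm, Finset.sum_comm (s := (Finset.univ : Finset (LI n k)))]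
  refine Finset.sum_congr rfl fun e _ => ?_
  rw [← Finset.mul_sum, ← Finset.mul_sum, count_inv x W W' h]

lemma SS_sum {n k : ℕ} (x : F2n n) (f : ZMod 2 → ℝ) (g : Set (F2n n) → ℝ) :
    ∑ W : Flat n k, g W.1 * SS n k x f W =
      ∑ ℓ : LI n k, ∑ d : Fin (k-1) → ZMod 2, ∑ e : ZMod 2, f e * g (VV x ℓ.1 (dl d e)) := by
  unfold SS
  simp only [Finset.mul_sum]
  rw [Finset.sum_comm]
  refine Finset.sum_congr rfl fun ℓ _ => ?_
  rw [Finset.sum_comm]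
  refine Finset.sum_congr rfl fun d _ => ?_
  rw [Finset.sum_comm]
  refine Finset.sum_congr rfl fun e _ => ?_
  have := sum_ind (⟨VV x ℓ.1 (dl d e), isFlat_VV x ℓ.1 _ ℓ.2⟩ : Flat n k) (fun W => g W.1)
  rw [← this, Finset.mul_sum]
  refine Finset.sum_congr rfl fun W _ => ?_
  ring

theorem stmt19 (n k : ℕ) (hk : 1 ≤ k) (hkn : k ≤ n) (x : F2n n)
    (η : ℝ) (hη0 : 0 ≤ η) (hη : η < 1/2) (W : Flat n k) :
    ∑ ℓ : {ℓ : Fin k → LinForm n // LinearIndependent (ZMod 2) ℓ},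
      ∑ ε' : Fin (k-1) → ZMod 2, ∑ e : ZMod 2,
        (Nat.card {ℓ : Fin k → LinForm n // LinearIndependent (ZMod 2) ℓ} : ℝ)⁻¹
          * ((2:ℝ)^(k-1))⁻¹ * (if e = 1 then η else 1 - η)
          * (if {z : F2n n | ∀ i : Fin k,
                  ℓ.1 i z = (if h : (i : ℕ) < k - 1 then ε' ⟨i, h⟩ else ℓ.1 i x + 1 + e)} = W.1
             then (1:ℝ) else 0)
      = (1 - (1 - 2*η)) * q0 n k W + (1 - 2*η) * qx n k x W := by
  have hLn : Nonempty (LI n k) := LI_nonempty hkn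
  set c : ℝ := (Nat.card (LI n k) : ℝ)⁻¹ * ((2:ℝ)^(k-1))⁻¹ with hc
  set f : ZMod 2 → ℝ := fun e => c * (if e = 1 then η else 1 - η) with hf
  have hL : (Fintype.card (LI n k) : ℝ) ≠ 0 := by
    exact_mod_cast Fintype.card_ne_zero
  have hS : ∀ W : Flat n k, SS n k x f W = _ := fun W => 
    (Finset.sum_congr rfl fun (ℓ : LI n k) _ => reparam x ℓ.1 W.1 f).symm
  refine (hS W).symm.trans ?_
  have hp : (2:ℝ)^k = 2 * 2^(k-1) := by rw [← pow_succ']; congr 1; omega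
  have hp0 : (2:ℝ)^(k-1) ≠ 0 := by positivity
  have hp1 : (1:ℝ) ≤ (2:ℝ)^(k-1) := one_le_pow₀ (by norm_num)
  have htot := SS_sum (k := k) x f (fun _ => 1)
  have hin := SS_sum (k := k) x f (fun W => if x ∈ W then 1 else 0)
  have hz : ∀ F : ZMod 2 → ℝ, ∑ e, F e = F 0 + F 1 := fun F => Fin.sum_univ_two F
  simp only [mem_VV hk] at hin
  have e1 : ∀ ℓ : LI n k, ∑ d : Fin (k-1) → ZMod 2, ∑ e : ZMod 2,
      f e * (if d = 0 ∧ e = 1 then (1:ℝ) else 0) = c * η := by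
    intro ℓ
    rw [Finset.sum_eq_single 0]
    · rw [hz]; simp [hf]
    · intro d _ hd; simp [hd]
    · simp
  rw [Finset.sum_congr rfl fun ℓ _ => e1 ℓ] at hin
  have e2 : ∑ e : ZMod 2, f e * 1 = c := by
    rw [hz]; simp [hf]; ring
  simp only [e2] at htot
  simp only [Finset.sum_const, Finset.card_univ, nsmul_eq_mul, Fintype.card_fun, ZMod.card,
    Fintype.card_fin, one_mul] at hin htot
  rw [hc, Nat.card_eq_fintype_card] at hin htot
  have hin' : ∑ W : Flat n k, (if x ∈ W.1 then (1:ℝ) else 0) * SS n k x f W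
      = η / 2^(k-1) := by
    rw [hin]; field_simp
  have htot' : ∑ W : Flat n k, SS n k x f W = 1 := by
    rw [htot]; push_cast; field_simp
  have hcard := card_flat hkn x
  set a : ℝ := ∑ W : Flat n k, (if x ∈ W.1 then (1 : ℝ) else 0) with ha
  have hFl : (Fintype.card (Flat n k) : ℝ) ≠ 0 := by
    have : Nonempty (Flat n k) := ⟨W⟩
    exact_mod_cast Fintype.card_ne_zero
  have ha0 : a ≠ 0 := by
    intro h; rw [h, mul_zero] at hcard; exact hFl hcard
  have hcomp : ∑ W : Flat n k, (if x ∈ W.1 then (0 : ℝ) else 1) = 2^k * a - a := by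
    rw [← hcard, ha, ← Finset.card_univ, Finset.cast_card, ← Finset.sum_sub_distrib]
    refine Finset.sum_congr rfl fun W _ => ?_
    split_ifs <;> norm_num
  by_cases hx : x ∈ W.1
  · have h1 : ∑ W' : Flat n k, (if x ∈ W'.1 then (1:ℝ) else 0) * SS n k x f W'
        = a * SS n k x f W := by
      rw [ha, Finset.sum_mul]
      refine Finset.sum_congr rfl fun W' _ => ?_
      split_ifs with h
      · rw [SS_inv x f W' W (by simp [h, hx])]
      · simp
    rw [h1] at hin'
    simp only [q0, qx, if_pos hx]
    rw [hcard, hp]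
    field_simp at hin' ⊢
    linarith
  · have h1 : ∑ W' : Flat n k, (if x ∈ W'.1 then (0:ℝ) else 1) * SS n k x f W'
        = (2^k * a - a) * SS n k x f W := by
      rw [← hcomp, Finset.sum_mul]
      refine Finset.sum_congr rfl fun W' _ => ?_
      split_ifs with h
      · simp
      · rw [SS_inv x f W' W (by simp [h, hx])]
    have h2 : ∑ W' : Flat n k, (if x ∈ W'.1 then (0:ℝ) else 1) * SS n k x f W'
        = 1 - η / 2^(k-1) := by
      refine Eq.trans ?_ (congrArg₂ (· - ·) htot' hin')
      rw [← Finset.sum_sub_distrib]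
      refine Finset.sum_congr rfl fun W _ => ?_
      split_ifs <;> ring
    rw [h1] at h2
    have h3 : (Nat.card {W : Flat n k // x ∉ W.1} : ℝ) = 2^k * a - a := by
      rw [← hcomp, Nat.card_eq_fintype_card, Fintype.card_subtype, Finset.cast_card,
        Finset.sum_filter]
      refine Finset.sum_congr rfl fun W _ => ?_
      by_cases h : x ∈ W.1 <;> simp only [h, not_true_eq_false, not_false_eq_true, if_true, if_false]
    simp only [q0, qx, if_neg hx]
    rw [h3, hcard]
    rw [hp] at h2 ⊢
    have h5 : 2 * (2:ℝ)^(k-1) - 1 ≠ 0 := by linarith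
    have h4 : 2 * (2:ℝ)^(k-1) * a - a = (2 * (2:ℝ)^(k-1) - 1) * a := by ring
    rw [h4] at h2 ⊢
    generalize (2:ℝ)^(k-1) = p at *
    have h6 : SS n k x f W = (1 - η / p) / ((2 * p - 1) * a) := by
      rw [eq_div_iff (mul_ne_zero h5 ha0), mul_comm]; exact h2
    rw [h6]
    obtain ⟨r, hr⟩ : ∃ r, r = 2 * p - 1 := ⟨_, rfl⟩
    rw [← hr] at h5 ⊢
    field_simp
    rw [hr]
    ring
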